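/- arXiv:0809.2651 — 3 statements merged into one kernel-verified Lean document; each statement's English description precedes it below -/
import Mathlib

section
/- Let P be a finite nonempty set of points in the Euclidean plane ℝ², K the convex hull of P, Q a line with Q ∩ K nonempty, and let q ∈ Q ∩ K satisfy F(q) ≥ F(x) for all x ∈ Q ∩ K (q is the center of the largest empty circle centered on Q). Then either q lies on the frontier (topological boundary) of K, or there exist two distinct points p₁, p₂ ∈ P with dist(q,p₁) = dist(q,p₂) = F(q); that is, the center of the LEC lies either on the convex hull boundary or on a Voronoi edge of P. -/
/-- The center of the largest empty circle centered on a query line lies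
either on the frontier of the convex hull `K` of `P`, or on a Voronoi edge of `P`
(i.e. two distinct points of `P` are simultaneously nearest to it). -/
theorem stmt1 (P : Finset (EuclideanSpace ℝ (Fin 2))) (hP : P.Nonempty)
    (q₀ v : EuclideanSpace ℝ (Fin 2)) (hv : v ≠ 0)
    (Q : Set (EuclideanSpace ℝ (Fin 2))) (hQ : Q = {x | ∃ t : ℝ, x = q₀ + t • v})
    (K : Set (EuclideanSpace ℝ (Fin 2))) (hK : K = convexHull ℝ (P : Set (EuclideanSpace ℝ (Fin 2))))
    (F : EuclideanSpace ℝ (Fin 2) → ℝ) (hF : ∀ x, F x = P.inf' hP (fun p => dist x p))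
    (q : EuclideanSpace ℝ (Fin 2)) (hq : q ∈ Q ∩ K)
    (hmax : ∀ x ∈ Q ∩ K, F x ≤ F q) :
    q ∈ frontier K ∨
      ∃ p₁ ∈ P, ∃ p₂ ∈ P, p₁ ≠ p₂ ∧ dist q p₁ = F q ∧ dist q p₂ = F q := by
  classical
  by_cases hfr : q ∈ frontier K
  · exact Or.inl hfr
  right
  obtain ⟨⟨hqQ, hqK⟩, -⟩ : q ∈ Q ∩ K ∧ True := ⟨hq, trivial⟩
  have hint : q ∈ interior K := by
    by_contra h
    exact hfr ⟨subset_closure hqK, h⟩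
  obtain ⟨p₁, hp₁, he⟩ := P.exists_mem_eq_inf' hP (fun p => dist q p)
  have hd1 : dist q p₁ = F q := by rw [hF, he]
  by_contra hcon
  push Not at hcon
  have hother : ∀ p ∈ P, p ≠ p₁ → F q < dist q p := by
    intro p hp hne
    have h1 : F q ≤ dist q p := by
      rw [hF]
      exact Finset.inf'_le (fun p => dist q p) hp
    exact lt_of_le_of_ne h1 (fun h => hcon p₁ hp₁ p hp hne.symm hd1 h.symm)
  obtain ⟨w, hw0, hwi, hwQ⟩ : ∃ w : EuclideanSpace ℝ (Fin 2), w ≠ 0 ∧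
      0 ≤ inner ℝ (q - p₁) w ∧ ∀ t : ℝ, q + t • w ∈ Q := by
    rw [hQ] at hqQ
    obtain ⟨s, hs⟩ := hqQ
    rcases le_total 0 (inner ℝ (q - p₁) v) with h | h
    · refine ⟨v, hv, h, fun t => ?_⟩
      rw [hQ]
      exact ⟨s + t, by rw [hs]; module⟩
    · refine ⟨-v, neg_ne_zero.mpr hv, by rw [inner_neg_right]; linarith, fun t => ?_⟩
      rw [hQ]
      exact ⟨s - t, by rw [hs]; module⟩
  have hcont : Continuous (fun t : ℝ => q + t • w) := by fun_prop
  have hev1 : ∀ᶠ t in nhds (0 : ℝ), q + t • w ∈ interior K := by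
    apply hcont.continuousAt.eventually_mem
    apply isOpen_interior.mem_nhds
    simpa using hint
  have hev2 : ∀ᶠ t in nhds (0 : ℝ), ∀ p ∈ P, p ≠ p₁ → F q < dist (q + t • w) p := by
    rw [Filter.eventually_all_finset]
    intro p hp
    by_cases hne : p = p₁
    · exact Filter.Eventually.of_forall fun t h => absurd hne h
    · have hc : Continuous (fun t : ℝ => dist (q + t • w) p) := by fun_prop
      have : ∀ᶠ t in nhds (0 : ℝ), F q < dist (q + t • w) p := by
        apply hc.continuousAt.eventually_const_lt
        simpa using hother p hp hne
      exact this.mono fun t h _ => h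
  have hpos : ∀ᶠ t in nhdsWithin (0 : ℝ) (Set.Ioi 0), 0 < t := eventually_mem_nhdsWithin
  obtain ⟨t, ht, h1, h2⟩ := (hpos.and
    ((hev1.and hev2).filter_mono nhdsWithin_le_nhds)).exists
  have hle := hmax (q + t • w) ⟨hwQ t, interior_subset h1⟩
  obtain ⟨p, hp, hpe⟩ := P.exists_mem_eq_inf' hP (fun p => dist (q + t • w) p)
  rw [hF (q + t • w), hpe] at hle
  by_cases hne : p = p₁
  · subst hne
    rw [← hd1, dist_eq_norm, dist_eq_norm] at hle
    have hrew : q + t • w - p = (q - p) + t • w := by module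
    have hsq : ‖q + t • w - p‖ ^ 2 ≤ ‖q - p‖ ^ 2 := by gcongr
    rw [hrew, norm_add_sq_real, inner_smul_right, norm_smul, mul_pow] at hsq
    have hwn : 0 < ‖w‖ := norm_pos_iff.mpr hw0
    have htn : 0 < ‖t‖ := norm_pos_iff.mpr ht.ne'
    have ha : 0 < ‖t‖ ^ 2 * ‖w‖ ^ 2 := by positivity
    have hb : 0 ≤ t * inner ℝ (q - p) w := mul_nonneg ht.le hwi
    linarith
  · exact absurd (h2 p hp hne) (not_lt.mpr hle)
end

section
/- Let P be a finite nonempty set of points in the Euclidean plane ℝ², K the convex hull of P, and Q a line. Suppose q lies in Q and in the interior of K, and q is a local maximizer of F along Q, i.e. there is ε > 0 such that F(q) ≥ F(x) for all x ∈ Q with dist(x,q) < ε. Then there exist two distinct points p₁, p₂ ∈ P with dist(q,p₁) = dist(q,p₂) = F(q), i.e. q lies on a Voronoi edge of P. -/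
/-- A local maximizer of the nearest-point distance `F` along a line `Q`,
lying in the interior of the convex hull `K` of `P`, lies on a Voronoi edge of `P`:
two distinct points of `P` are simultaneously nearest to it. -/
theorem stmt2 (P : Finset (EuclideanSpace ℝ (Fin 2))) (hP : P.Nonempty)
    (q₀ v : EuclideanSpace ℝ (Fin 2)) (hv : v ≠ 0)
    (Q : Set (EuclideanSpace ℝ (Fin 2))) (hQ : Q = {x | ∃ t : ℝ, x = q₀ + t • v})
    (K : Set (EuclideanSpace ℝ (Fin 2))) (hK : K = convexHull ℝ (P : Set (EuclideanSpace ℝ (Fin 2))))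
    (F : EuclideanSpace ℝ (Fin 2) → ℝ) (hF : ∀ x, F x = P.inf' hP (fun p => dist x p))
    (q : EuclideanSpace ℝ (Fin 2)) (hqQ : q ∈ Q) (hqK : q ∈ interior K)
    (ε : ℝ) (hε : 0 < ε)
    (hloc : ∀ x ∈ Q, dist x q < ε → F x ≤ F q) :
    ∃ p₁ ∈ P, ∃ p₂ ∈ P, p₁ ≠ p₂ ∧ dist q p₁ = F q ∧ dist q p₂ = F q := by
  obtain ⟨p, hp, hpe⟩ := P.exists_mem_eq_inf' hP (fun p => dist q p)
  rw [← hF q] at hpe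
  by_contra hcon
  have hlt : ∀ p' ∈ P, p' ≠ p → F q < dist q p' := by
    intro p' hp' hne
    have hle : F q ≤ dist q p' := by
      rw [hF q]; exact Finset.inf'_le _ hp'
    refine lt_of_le_of_ne hle fun h => hcon ⟨p', hp', p, hp, hne, h.symm, hpe.symm⟩
  have hev : ∀ᶠ x in nhds q, ∀ p' ∈ P, p' ≠ p → F q < dist x p' := by
    rw [Filter.eventually_all_finset]
    intro p' hp'
    by_cases hne : p' = p
    · simp [hne]
    · have hc : Continuous fun x : EuclideanSpace ℝ (Fin 2) => dist x p' := by fun_prop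
      filter_upwards [hc.continuousAt.eventually (lt_mem_nhds (hlt p' hp' hne))] with x hx _
      exact hx
  obtain ⟨δ, hδ, hball⟩ := Metric.eventually_nhds_iff.1 hev
  obtain ⟨s, hs1, hs⟩ : ∃ s : ℝ, |s| = 1 ∧ 0 ≤ s * inner ℝ (q - p) v := by
    rcases le_total 0 (inner ℝ (q - p) v) with h | h
    · exact ⟨1, by simp, by linarith⟩
    · exact ⟨-1, by simp, by linarith⟩
  have hv' : 0 < ‖v‖ := norm_pos_iff.2 hv
  have hm : 0 < min ε δ := lt_min hε hδ
  obtain ⟨t, ht, htv⟩ : ∃ t : ℝ, 0 < t ∧ t * ‖v‖ < min ε δ := by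
    refine ⟨min ε δ / 2 / ‖v‖, by positivity, ?_⟩
    rw [div_mul_cancel₀ _ hv'.ne']
    linarith
  have hdist : dist (q + (t * s) • v) q < min ε δ := by
    rw [dist_eq_norm, add_sub_cancel_left, norm_smul, Real.norm_eq_abs, abs_mul, hs1,
      abs_of_pos ht, mul_one]
    exact htv
  have hxQ : q + (t * s) • v ∈ Q := by
    rw [hQ] at hqQ ⊢
    obtain ⟨a, ha⟩ := hqQ
    exact ⟨a + t * s, by rw [ha, add_smul, add_assoc]⟩
  have hle := hloc _ hxQ (hdist.trans_le (min_le_left _ _))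
  have hb := hball (hdist.trans_le (min_le_right _ _))
  have hgt : F q < dist (q + (t * s) • v) p := by
    rw [hpe, dist_eq_norm, dist_eq_norm]
    refine lt_of_pow_lt_pow_left₀ 2 (norm_nonneg _) ?_
    rw [show q + (t * s) • v - p = (q - p) + (t * s) • v by abel, norm_add_sq_real,
      inner_smul_right, norm_smul, Real.norm_eq_abs, abs_mul, hs1, abs_of_pos ht]
    have h1 : 0 ≤ t * (s * inner ℝ (q - p) v) := mul_nonneg ht.le hs
    have h2 : 0 < (t * 1 * ‖v‖) ^ 2 := by positivity
    linarith
  obtain ⟨p', hp', hpe'⟩ := P.exists_mem_eq_inf' hP (fun p => dist (q + (t * s) • v) p)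
  rw [← hF] at hpe'
  by_cases hne : p' = p
  · subst hne
    linarith
  · have := hb p' hp' hne
    linarith
end

section
/- Let P be a finite nonempty set of points in the Euclidean plane ℝ², K the convex hull of P, and Q a line with Q ∩ K nonempty. Let C be the set consisting of all points of Q on the frontier of K together with all points x ∈ Q ∩ K for which there exist distinct p₁, p₂ ∈ P with dist(x,p₁) = dist(x,p₂) = F(x). Then C is nonempty and the supremum of F over Q ∩ K equals the supremum of F over C; i.e., the radius of the largest empty circle centered on Q is realized at an intersection of Q with the convex hull boundary or with a Voronoi edge. -/
/-- The radius of the largest empty circle centered on a query line `Q`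
is realized at an intersection of `Q` with the frontier of the convex hull or with a
Voronoi edge: the set `C` of such candidate points is nonempty, and the supremum of the
nearest-point distance `F` over `Q ∩ K` equals its supremum over `C`. -/
theorem stmt3 (P : Finset (EuclideanSpace ℝ (Fin 2))) (hP : P.Nonempty)
    (q₀ v : EuclideanSpace ℝ (Fin 2)) (hv : v ≠ 0)
    (Q : Set (EuclideanSpace ℝ (Fin 2))) (hQ : Q = {x | ∃ t : ℝ, x = q₀ + t • v})
    (K : Set (EuclideanSpace ℝ (Fin 2))) (hK : K = convexHull ℝ (P : Set (EuclideanSpace ℝ (Fin 2))))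
    (F : EuclideanSpace ℝ (Fin 2) → ℝ) (hF : ∀ x, F x = P.inf' hP (fun p => dist x p))
    (hQK : (Q ∩ K).Nonempty)
    (C : Set (EuclideanSpace ℝ (Fin 2)))
    (hC : C = (Q ∩ frontier K) ∪
      {x ∈ Q ∩ K | ∃ p₁ ∈ P, ∃ p₂ ∈ P, p₁ ≠ p₂ ∧ dist x p₁ = F x ∧ dist x p₂ = F x}) :
    C.Nonempty ∧ sSup (F '' (Q ∩ K)) = sSup (F '' C) := by
  have hFc : Continuous F := by
    have : F = fun x => P.inf' hP (fun p => dist x p) := funext hF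
    rw [this]
    exact Continuous.finset_inf'_apply hP (fun p _ => continuous_id.dist continuous_const)
  have hKc : IsCompact K := by
    rw [hK]; exact P.finite_toSet.isCompact_convexHull ℝ
  have hQc : IsClosed Q := by
    have h1 : Q = ((AffineSubspace.mk' q₀ (Submodule.span ℝ {v}) :
        AffineSubspace ℝ (EuclideanSpace ℝ (Fin 2))) : Set (EuclideanSpace ℝ (Fin 2))) := by
      rw [hQ]
      ext x
      simp only [Set.mem_setOf_eq, SetLike.mem_coe, AffineSubspace.mem_mk', vsub_eq_sub,
        Submodule.mem_span_singleton]
      constructor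
      · rintro ⟨t, rfl⟩
        exact ⟨t, by abel⟩
      · rintro ⟨t, ht⟩
        exact ⟨t, by rw [ht]; abel⟩
    rw [h1]
    exact AffineSubspace.closed_of_finiteDimensional _
  have hcomp : IsCompact (Q ∩ K) := hKc.inter_left hQc
  obtain ⟨x₀, hx₀, hmax⟩ := hcomp.exists_isMaxOn hQK hFc.continuousOn
  have hmax' : ∀ y ∈ Q ∩ K, F y ≤ F x₀ := fun y hy => hmax hy
  have hCsub : C ⊆ Q ∩ K := by
    rw [hC]
    rintro x (hx | hx)
    · exact ⟨hx.1, hKc.isClosed.frontier_subset hx.2⟩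
    · exact hx.1
  have hx₀C : x₀ ∈ C := by
    by_contra hnot
    rw [hC] at hnot
    have hnf : x₀ ∉ frontier K := fun h => hnot (Or.inl ⟨hx₀.1, h⟩)
    have hint : x₀ ∈ interior K := by
      by_contra h
      exact hnf ⟨subset_closure hx₀.2, h⟩
    obtain ⟨p, hp, hpF⟩ := P.exists_mem_eq_inf' hP (fun p => dist x₀ p)
    rw [← hF] at hpF
    have hle : ∀ q ∈ P, F x₀ ≤ dist x₀ q := fun q hq => by
      rw [hF]; exact P.inf'_le (fun p => dist x₀ p) hq
    have hlt : ∀ q ∈ P, q ≠ p → dist x₀ p < dist x₀ q := by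
      intro q hq hqp
      rw [← hpF]
      refine lt_of_le_of_ne (hle q hq) fun h => hnot (Or.inr ⟨hx₀, p, hp, q, hq, hqp.symm,
        hpF.symm, h.symm⟩)
    have hev : ∀ᶠ x in nhds x₀, ∀ q ∈ P, q ≠ p → dist x p < dist x q := by
      rw [Filter.eventually_all_finset]
      intro q hq
      by_cases hqp : q = p
      · exact Filter.Eventually.of_forall fun x h => absurd hqp h
      · have := (continuous_id.dist continuous_const).continuousAt.eventually_lt
          ((continuous_id.dist continuous_const).continuousAt) (hlt q hq hqp)
        filter_upwards [this] with x hx _ using hx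
    have hev2 : ∀ᶠ x in nhds x₀, x ∈ K ∧ F x = dist x p := by
      filter_upwards [hev, mem_interior_iff_mem_nhds.1 hint] with x hx hxK
      refine ⟨hxK, ?_⟩
      rw [hF]
      refine le_antisymm (P.inf'_le (fun p => dist x p) hp) ?_
      refine Finset.le_inf' hP _ fun q hq => ?_
      by_cases hqp : q = p
      · rw [hqp]
      · exact (hx q hq hqp).le
    have hcont : Filter.Tendsto (fun t : ℝ => x₀ + t • v) (nhds 0) (nhds x₀) := by
      have : Continuous (fun t : ℝ => x₀ + t • v) := by fun_prop
      simpa using this.tendsto 0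
    obtain ⟨ε, hε, hball⟩ := Metric.eventually_nhds_iff.1 (hcont.eventually hev2)
    have key : ∀ t : ℝ, |t| < ε → dist (x₀ + t • v) p ≤ dist x₀ p := by
      intro t ht
      have h := hball (y := t) (by simpa using ht)
      rw [← h.2, ← hpF]
      refine hmax' _ ⟨?_, h.1⟩
      have h2 := hx₀.1
      rw [hQ] at h2 ⊢
      obtain ⟨s, hs⟩ := h2
      exact ⟨s + t, by rw [hs, add_smul, add_assoc]⟩
    have k1 := key (ε / 2) (by rw [abs_of_pos (by linarith)]; linarith)
    have k2 := key (-(ε / 2)) (by rw [abs_neg, abs_of_pos (by linarith)]; linarith)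
    rw [dist_eq_norm, dist_eq_norm] at k1 k2
    have e1 : x₀ + (ε / 2) • v - p = (x₀ - p) + (ε / 2) • v := by abel
    have e2 : x₀ + (-(ε / 2)) • v - p = (x₀ - p) - (ε / 2) • v := by rw [neg_smul]; abel
    rw [e1] at k1
    rw [e2] at k2
    have par := parallelogram_law_with_norm ℝ (x₀ - p) ((ε / 2) • v)
    have hpos : 0 < ‖(ε / 2) • v‖ := norm_pos_iff.2 (smul_ne_zero (by positivity) hv)
    nlinarith [mul_self_le_mul_self (norm_nonneg _) k1, mul_self_le_mul_self (norm_nonneg _) k2,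
      mul_pos hpos hpos]
  refine ⟨⟨x₀, hx₀C⟩, ?_⟩
  have g1 : IsGreatest (F '' (Q ∩ K)) (F x₀) :=
    ⟨⟨x₀, hx₀, rfl⟩, by rintro _ ⟨y, hy, rfl⟩; exact hmax' y hy⟩
  have g2 : IsGreatest (F '' C) (F x₀) :=
    ⟨⟨x₀, hx₀C, rfl⟩, by rintro _ ⟨y, hy, rfl⟩; exact hmax' y (hCsub hy)⟩
  rw [g1.csSup_eq, g2.csSup_eq]
end
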